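/- arXiv:1304.5350 — 9 statements merged into one kernel-verified Lean document; each statement's English description precedes it below -/
import Mathlib

section
/- Let X be a nonempty set, let f, μ₀, μ₁, s₀, s₁ : X → ℝ and let b₀, b₁ be reals with 0 ≤ b₀ ≤ b₁. Assume that for all x ∈ X: |f(x) - μ₀(x)| ≤ b₀·s₀(x), |f(x) - μ₁(x)| ≤ b₁·s₁(x), and 0 ≤ s₁(x) ≤ s₀(x). Let x₁ ∈ X be a maximizer of μ₁ + b₁·s₁ over X. Then for every x• ∈ X, μ₀(x₁) + (b₀ + 2·b₁)·s₀(x₁) ≥ μ₀(x•) - b₀·s₀(x•). -/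
theorem le_add_two_nsmul_of_ucb_maximizer {X G : Type*} [AddCommGroup G] [LinearOrder G]
    [IsOrderedAddMonoid G] {f μ r : X → G} (hconf : ∀ x, |f x - μ x| ≤ r x)
    {x₁ : X} (hx₁ : ∀ x, μ x + r x ≤ μ x₁ + r x₁) (x : X) :
    f x ≤ f x₁ + 2 • r x₁ :=
  calc
    f x ≤ μ x + r x := sub_le_iff_le_add.mp (sub_le_of_abs_sub_le_right (hconf x))
    _ ≤ μ x₁ + r x₁ := hx₁ x
    _ ≤ (f x₁ + r x₁) + r x₁ := by
      gcongr
      exact sub_le_iff_le_add.mp (sub_le_of_abs_sub_le_left (hconf x₁))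
    _ = f x₁ + 2 • r x₁ := by rw [two_nsmul, add_assoc]

theorem next_ucb_in_relevant_region_general {X R : Type*} [Ring R] [LinearOrder R]
    [IsOrderedRing R] {f μ₀ μ₁ s₀ s₁ : X → R} {b₀ b₁ : R} (hb₁ : 0 ≤ b₁)
    (hconf₀ : ∀ x, |f x - μ₀ x| ≤ b₀ * s₀ x) (hconf₁ : ∀ x, |f x - μ₁ x| ≤ b₁ * s₁ x)
    (hs : ∀ x, s₁ x ≤ s₀ x)
    {x₁ : X} (hx₁ : ∀ x, μ₁ x + b₁ * s₁ x ≤ μ₁ x₁ + b₁ * s₁ x₁) (xb : X) :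
    μ₀ xb - b₀ * s₀ xb ≤ μ₀ x₁ + (b₀ + 2 * b₁) * s₀ x₁ :=
  calc
    μ₀ xb - b₀ * s₀ xb ≤ f xb := sub_le_of_abs_sub_le_left (hconf₀ xb)
    _ ≤ f x₁ + 2 • (b₁ * s₁ x₁) := le_add_two_nsmul_of_ucb_maximizer hconf₁ hx₁ xb
    _ ≤ (μ₀ x₁ + b₀ * s₀ x₁) + 2 • (b₁ * s₀ x₁) := by
      gcongr
      · exact sub_le_iff_le_add.mp (sub_le_of_abs_sub_le_right (hconf₀ x₁))
      · exact hs x₁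
    _ = μ₀ x₁ + (b₀ + 2 * b₁) * s₀ x₁ := by noncomm_ring

/-- Deterministic core of Lemma 2: the next UCB query lies in the relevant region. -/
theorem next_ucb_in_relevant_region {X : Type*} [Nonempty X]
    (f μ₀ μ₁ s₀ s₁ : X → ℝ) (b₀ b₁ : ℝ) (hb₀ : 0 ≤ b₀) (hb : b₀ ≤ b₁)
    (hconf₀ : ∀ x : X, |f x - μ₀ x| ≤ b₀ * s₀ x)
    (hconf₁ : ∀ x : X, |f x - μ₁ x| ≤ b₁ * s₁ x)
    (hs₁ : ∀ x : X, 0 ≤ s₁ x) (hs : ∀ x : X, s₁ x ≤ s₀ x)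
    (x₁ : X) (hx₁ : ∀ x : X, μ₁ x + b₁ * s₁ x ≤ μ₁ x₁ + b₁ * s₁ x₁) :
    ∀ xb : X, μ₀ xb - b₀ * s₀ xb ≤ μ₀ x₁ + (b₀ + 2 * b₁) * s₀ x₁ :=
  next_ucb_in_relevant_region_general (hb₀.trans hb) hconf₀ hconf₁ hs hx₁
end

section
/- Let X be a nonempty set, let f, μ₀, μ₁, s₀, s₁, s' : X → ℝ and let b₀, b₁ be reals with 0 ≤ b₀ ≤ b₁. Assume that for all x ∈ X: |f(x) - μ₀(x)| ≤ b₀·s₀(x), |f(x) - μ₁(x)| ≤ b₁·s₁(x), and 0 ≤ s₁(x) ≤ s'(x) ≤ s₀(x). Let x• ∈ X be a maximizer of μ₀ - b₀·s₀ over X, set y• = μ₀(x•) - b₀·s₀(x•), and define the relevant region R⁺ = {x ∈ X : μ₀(x) + (b₀ + 2·b₁)·s₀(x) ≥ y•}. Let x₁ ∈ X be a maximizer of μ₁ + b₁·s₁ over X, and let z ∈ R⁺ satisfy s'(x) ≤ s'(z) for all x ∈ R⁺. Then s₁(x₁) ≤ s'(z). -/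
/-!
Every value of `f` exceeds the value at a UCB point `x₁` by at most the full width `2 * b₁ * s₁ x₁`
of the confidence interval there. Since deviations only shrink, `s₀` may replace `s₁` in this bound,
which places `x₁` in the relevant region computed one iteration earlier. Pure Exploration maximizes
`s'` over that region, and `s₁ ≤ s'`.
-/

section UCB

variable {X R : Type*} [CommRing R] [LinearOrder R] [IsStrictOrderedRing R]

/-- The relevant region `R⁺` at level `y`: the points whose upper confidence bound, enlarged by the
full confidence width `2 * b₁ * s` of the next iteration, reaches `y`. The level is a free
parameter; the algorithm takes the greatest lower confidence bound. -/
def relevantRegion (μ s : X → R) (b₀ b₁ y : R) : Set X :=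
  {x | y ≤ μ x + (b₀ + 2 * b₁) * s x}

theorem le_add_two_mul_width_of_forall_ucb_le {f μ w : X → R} {x₁ : X}
    (hconf : ∀ x, |f x - μ x| ≤ w x) (hx₁ : ∀ x, μ x + w x ≤ μ x₁ + w x₁) (x : X) :
    f x ≤ f x₁ + 2 * w x₁ :=
  calc
    f x ≤ μ x + w x := sub_le_iff_le_add'.mp (abs_le.mp (hconf x)).2
    _ ≤ μ x₁ + w x₁ := hx₁ x
    _ = μ x₁ - w x₁ + 2 * w x₁ := by ring
    _ ≤ f x₁ + 2 * w x₁ := by grw [sub_le_of_abs_sub_le_left (hconf x₁)]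

theorem mem_relevantRegion_of_le_add_two_mul {f μ s : X → R} {b₀ b₁ y t : R} {x : X}
    (hb₁ : 0 ≤ b₁) (hconf : |f x - μ x| ≤ b₀ * s x) (ht : t ≤ s x)
    (hy : y ≤ f x + 2 * (b₁ * t)) : x ∈ relevantRegion μ s b₀ b₁ y :=
  calc
    y ≤ f x + 2 * (b₁ * t) := hy
    _ ≤ (μ x + b₀ * s x) + 2 * (b₁ * s x) := by
      grw [sub_le_iff_le_add'.mp (abs_le.mp hconf).2, ht]
    _ = μ x + (b₀ + 2 * b₁) * s x := by ring

theorem ucb_width_le_pe_width_general {f μ₀ μ₁ s₀ s₁ s' : X → R} {b₀ b₁ y : R} (hb₁ : 0 ≤ b₁)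
    (hconf₀ : ∀ x, |f x - μ₀ x| ≤ b₀ * s₀ x) (hconf₁ : ∀ x, |f x - μ₁ x| ≤ b₁ * s₁ x)
    (hs₁' : ∀ x, s₁ x ≤ s' x) (hs'₀ : ∀ x, s' x ≤ s₀ x) {x : X} (hy : y ≤ f x)
    {x₁ : X} (hx₁ : ∀ x, μ₁ x + b₁ * s₁ x ≤ μ₁ x₁ + b₁ * s₁ x₁)
    {z : X} (hz : ∀ x ∈ relevantRegion μ₀ s₀ b₀ b₁ y, s' x ≤ s' z) :
    s₁ x₁ ≤ s' z := by
  have hy₁ : y ≤ f x₁ + 2 * (b₁ * s₁ x₁) :=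
    hy.trans (le_add_two_mul_width_of_forall_ucb_le hconf₁ hx₁ x)
  have hx₁_mem : x₁ ∈ relevantRegion μ₀ s₀ b₀ b₁ y :=
    mem_relevantRegion_of_le_add_two_mul hb₁ (hconf₀ x₁) ((hs₁' x₁).trans (hs'₀ x₁)) hy₁
  exact (hs₁' x₁).trans (hz x₁ hx₁_mem)

end UCB

/-- Deterministic form of Lemma 2: the confidence width at the next UCB query is
bounded by the one at the last Pure Exploration query of the previous batch. -/
theorem ucb_width_le_pe_width {X : Type*} [Nonempty X]
    (f μ₀ μ₁ s₀ s₁ s' : X → ℝ) (b₀ b₁ : ℝ) (hb₀ : 0 ≤ b₀) (hb : b₀ ≤ b₁)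
    (hconf₀ : ∀ x : X, |f x - μ₀ x| ≤ b₀ * s₀ x)
    (hconf₁ : ∀ x : X, |f x - μ₁ x| ≤ b₁ * s₁ x)
    (hs₁ : ∀ x : X, 0 ≤ s₁ x) (hs₁' : ∀ x : X, s₁ x ≤ s' x) (hs'₀ : ∀ x : X, s' x ≤ s₀ x)
    (xb : X) (hxb : ∀ x : X, μ₀ x - b₀ * s₀ x ≤ μ₀ xb - b₀ * s₀ xb)
    (x₁ : X) (hx₁ : ∀ x : X, μ₁ x + b₁ * s₁ x ≤ μ₁ x₁ + b₁ * s₁ x₁)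
    (z : X) (hzR : z ∈ {x : X | μ₀ xb - b₀ * s₀ xb ≤ μ₀ x + (b₀ + 2 * b₁) * s₀ x})
    (hz : ∀ x ∈ {x : X | μ₀ xb - b₀ * s₀ xb ≤ μ₀ x + (b₀ + 2 * b₁) * s₀ x}, s' x ≤ s' z) :
    s₁ x₁ ≤ s' z :=
  ucb_width_le_pe_width_general (hb₀.trans hb) hconf₀ hconf₁ hs₁' hs'₀
    (sub_le_of_abs_sub_le_left (hconf₀ xb)) hx₁ hz
end

section
/- Let K ≥ 1 be a natural number and let σ : ℕ → ℕ → ℝ be a doubly indexed family of nonnegative reals such that for all t and all k with 1 ≤ k < K one has σ(t+1, 0) ≤ σ(t, k). Then for every natural number T, ∑_{t < T} σ(t, 0) ≤ ((K-1)/K)·σ(0, 0) + (1/K)·∑_{t < T} ∑_{k < K} σ(t, k). -/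
/-!
Each of the `K - 1` Pure Exploration deviations of batch `t` dominates the next UCB deviation, so
`σ t 0 + (K - 1) * σ (t + 1) 0` is at most the sum of batch `t`. Summed over `t < T`, the left-hand
side is `K` times the sum of the UCB deviations, up to the boundary term
`(K - 1) * (σ T 0 - σ 0 0)` caused by the shift of the index.
-/

theorem add_nsmul_le_sum_range_succ {M : Type*} [AddCommMonoid M] [PartialOrder M]
    [IsOrderedAddMonoid M] {f : ℕ → M} {b : M} {n : ℕ} (hb : ∀ k < n, b ≤ f (k + 1)) :
    f 0 + n • b ≤ ∑ k ∈ Finset.range (n + 1), f k := by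
  have tail_le : n • b ≤ ∑ k ∈ Finset.range n, f (k + 1) := by
    simpa only [Finset.card_range] using
      Finset.card_nsmul_le_sum (Finset.range n) (fun k => f (k + 1)) b
        fun k hk => hb k (Finset.mem_range.mp hk)
  rw [Finset.sum_range_succ', add_comm]
  gcongr

theorem one_add_mul_sum_range_le {R : Type*} [Ring R] [PartialOrder R] [IsOrderedAddMonoid R]
    {a s : ℕ → R} {c : R} {T : ℕ} (has : ∀ t < T, a t + c * a (t + 1) ≤ s t) :
    (1 + c) * ∑ t ∈ Finset.range T, a t ≤ c * (a 0 - a T) + ∑ t ∈ Finset.range T, s t :=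
  calc (1 + c) * ∑ t ∈ Finset.range T, a t
      = c * ∑ t ∈ Finset.range T, (a t - a (t + 1)) +
          ∑ t ∈ Finset.range T, (a t + c * a (t + 1)) := by
        simp only [Finset.mul_sum, ← Finset.sum_add_distrib]
        refine Finset.sum_congr rfl fun t _ => ?_
        noncomm_ring
    _ = c * (a 0 - a T) + ∑ t ∈ Finset.range T, (a t + c * a (t + 1)) := by
        rw [Finset.sum_range_sub']
    _ ≤ c * (a 0 - a T) + ∑ t ∈ Finset.range T, s t := by
        gcongr with t ht
        exact has t (Finset.mem_range.mp ht)

theorem sum_ucb_deviations_le_general {F : Type*} [Field F] [LinearOrder F]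
    [IsStrictOrderedRing F] {K : ℕ} (hK : 1 ≤ K) {σ : ℕ → ℕ → F} {T : ℕ}
    (h : ∀ t < T, ∀ k, 1 ≤ k → k < K → σ (t + 1) 0 ≤ σ t k) :
    ∑ t ∈ Finset.range T, σ t 0 ≤
      (((K : F) - 1) / K) * (σ 0 0 - σ T 0) +
        (1 / (K : F)) * ∑ t ∈ Finset.range T, ∑ k ∈ Finset.range K, σ t k := by
  obtain ⟨n, rfl⟩ := Nat.exists_eq_add_of_le' hK
  have batch_le : ∀ t < T,
      σ t 0 + (n : F) * σ (t + 1) 0 ≤ ∑ k ∈ Finset.range (n + 1), σ t k := fun t ht => by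
    rw [← nsmul_eq_mul]
    exact add_nsmul_le_sum_range_succ fun k hk => h t ht (k + 1) (by lia) (by lia)
  have mul_sum_le := one_add_mul_sum_range_le (a := fun t => σ t 0) batch_le
  have n_succ_pos : (0 : F) < n + 1 := by positivity
  push_cast
  rw [add_sub_cancel_right, div_mul_eq_mul_div, one_div_mul_eq_div, ← add_div,
    le_div_iff₀' n_succ_pos, add_comm (n : F) 1]
  exact mul_sum_le

/-- Deterministic form of Lemma 3: the sum of the deviations of the UCB queries is
bounded (up to a boundary term) by `1/K` times the sum of all deviations. -/
theorem sum_ucb_deviations_le (K : ℕ) (hK : 1 ≤ K) (σ : ℕ → ℕ → ℝ)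
    (hσ : ∀ t k, 0 ≤ σ t k)
    (h : ∀ t k, 1 ≤ k → k < K → σ (t + 1) 0 ≤ σ t k) :
    ∀ T : ℕ, ∑ t ∈ Finset.range T, σ t 0 ≤
      (((K : ℝ) - 1) / K) * σ 0 0 +
        (1 / (K : ℝ)) * ∑ t ∈ Finset.range T, ∑ k ∈ Finset.range K, σ t k := by
  intro T
  have coeff_nonneg : 0 ≤ ((K : ℝ) - 1) / K :=
    div_nonneg (sub_nonneg.mpr (Nat.one_le_cast.mpr hK)) K.cast_nonneg
  refine (sum_ucb_deviations_le_general hK fun t _ => h t).trans ?_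
  gcongr
  exact sub_le_self _ (hσ T 0)
end

section
/- Let n be a natural number, let M be an n×n real symmetric positive semidefinite matrix whose diagonal entries satisfy M_{t,t} ≤ 1 for all t < n, and let σ > 0. For each t < n let M_t denote the top-left t×t block of M, let v_t ∈ ℝ^t be the vector with entries (M_{i,t})_{i<t}, and define the posterior variance s_t² := M_{t,t} - v_tᵀ (M_t + σ²·I_t)⁻¹ v_t. Then ∑_{t<n} s_t² ≤ (1 / log(1 + σ⁻²)) · log(det(I_n + σ⁻²·M)). -/
open Matrix

/-!
Each posterior variance `s_t²` is a Schur complement in the Gram matrix, so the determinant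
factors along the leading blocks: `det (1 + σ⁻² M) = ∏ t, (1 + σ⁻² s_t²)`. Since
`0 ≤ s_t² ≤ M t t ≤ 1`, Bernoulli's inequality `(1 + σ⁻²) ^ s_t² ≤ 1 + σ⁻² s_t²` bounds each
`s_t²` by `log (1 + σ⁻² s_t²) / log (1 + σ⁻²)`, and these bounds add up to the claim.
-/

theorem mul_log_one_add_le_log_one_add_mul {a s : ℝ} (ha : -1 < a) (hs₀ : 0 ≤ s) (hs₁ : s ≤ 1) :
    s * Real.log (1 + a) ≤ Real.log (1 + s * a) := by
  have ha' : 0 < 1 + a := by linarith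
  rw [← Real.log_rpow ha']
  exact Real.log_le_log (Real.rpow_pos_of_pos ha' s)
    (rpow_one_add_le_one_add_mul_self ha.le hs₀ hs₁)

theorem submatrix_sumElim_eq_fromBlocks {m n m' n' ι κ R : Type*} (M : Matrix ι κ R)
    (e : m → ι) (f : n → ι) (e' : m' → κ) (f' : n' → κ) :
    M.submatrix (Sum.elim e f) (Sum.elim e' f') =
      fromBlocks (M.submatrix e e') (M.submatrix e f') (M.submatrix f e') (M.submatrix f f') := by
  ext (_ | _) (_ | _) <;> rfl

section CommRing

variable {m ι R : Type*} [Fintype m] [DecidableEq m] [CommRing R]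

/-- The covariance matrix of a Gaussian vector with prior covariance `M`, conditioned on
observations of its coordinates `e i` with independent noise of variance `c`. Its diagonal entries
are the posterior variances. The inverse is `0` when `M.submatrix e e + c • 1` is singular. -/
noncomputable def posteriorCovariance (M : Matrix ι ι R) (c : R) (e : m → ι) : Matrix ι ι R :=
  M - M.submatrix id e * (M.submatrix e e + c • 1)⁻¹ * M.submatrix e id

theorem posteriorCovariance_apply_self {M : Matrix ι ι R} (hM : M.IsSymm) (c : R) (e : m → ι)
    (t : ι) :
    posteriorCovariance M c e t t =
      M t t - (fun i ↦ M (e i) t) ⬝ᵥ (M.submatrix e e + c • 1)⁻¹ *ᵥ fun i ↦ M (e i) t := by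
  have hrow : (fun i ↦ M (e i) t) = fun i ↦ M t (e i) := funext fun i ↦ hM.apply t (e i)
  rw [posteriorCovariance, Matrix.mul_assoc, Matrix.sub_apply]
  nth_rw 1 [hrow]
  rfl

theorem det_submatrix_sumElim_add_smul_one {n : Type*} [Fintype n] [DecidableEq n]
    (M : Matrix ι ι R) {c : R} {e : m → ι} (he : IsUnit (M.submatrix e e + c • 1)) (f : n → ι) :
    (M.submatrix (Sum.elim e f) (Sum.elim e f) + c • 1).det =
      (M.submatrix e e + c • 1).det *
        ((posteriorCovariance M c e).submatrix f f + c • 1).det := by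
  have hblocks : M.submatrix (Sum.elim e f) (Sum.elim e f) + c • 1 =
      fromBlocks (M.submatrix e e + c • 1) (M.submatrix e f) (M.submatrix f e)
        (M.submatrix f f + c • 1) := by
    rw [submatrix_sumElim_eq_fromBlocks, ← fromBlocks_one, fromBlocks_smul, fromBlocks_add]
    simp only [smul_zero, add_zero]
  have hschur : (posteriorCovariance M c e).submatrix f f + c • 1 =
      M.submatrix f f + c • 1 -
        M.submatrix f e * (M.submatrix e e + c • 1)⁻¹ * M.submatrix e f :=
    sub_add_eq_add_sub _ _ _
  let := he.invertible
  rw [hblocks, det_fromBlocks₁₁, invOf_eq_nonsing_inv, hschur]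

theorem det_add_smul_one_eq_mul_posteriorCovariance_last {k : ℕ}
    (M : Matrix (Fin (k + 1)) (Fin (k + 1)) R) {c : R}
    (hM : IsUnit (M.submatrix Fin.castSucc Fin.castSucc + c • 1)) :
    (M + c • 1).det =
      (M.submatrix Fin.castSucc Fin.castSucc + c • 1).det *
        (posteriorCovariance M c Fin.castSucc (Fin.last k) (Fin.last k) + c) := by
  have hequiv : ⇑(finSumFinEquiv (m := k) (n := 1)) =
      Sum.elim Fin.castSucc fun _ ↦ Fin.last k := by
    ext (_ | _) <;> simp
  have hreindex := det_submatrix_equiv_self (finSumFinEquiv (m := k) (n := 1)) (M + c • 1)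
  rw [← hreindex, submatrix_add, submatrix_smul, Pi.add_apply, Pi.add_apply, Pi.smul_apply,
    Pi.smul_apply, submatrix_one_equiv, hequiv, det_submatrix_sumElim_add_smul_one M hM,
    det_unique (n := Fin 1)]
  simp

theorem det_add_smul_one_eq_prod_posteriorCovariance {k : ℕ} (M : Matrix (Fin k) (Fin k) R)
    {c : R}
    (hM : ∀ t : Fin k,
      IsUnit (M.submatrix (Fin.castLE t.isLt.le) (Fin.castLE t.isLt.le) + c • 1)) :
    (M + c • 1).det = ∏ t : Fin k, (posteriorCovariance M c (Fin.castLE t.isLt.le) t t + c) := by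
  induction k with
  | zero => simp
  | succ k ih =>
    rw [det_add_smul_one_eq_mul_posteriorCovariance_last M (hM (Fin.last k)),
      ih (M.submatrix Fin.castSucc Fin.castSucc) fun t ↦ hM t.castSucc, Fin.prod_univ_castSucc]
    rfl

end CommRing

section RCLike

open scoped ComplexOrder

variable {m ι 𝕜 : Type*} [DecidableEq m] [RCLike 𝕜] {M : Matrix ι ι 𝕜} {c : 𝕜}

theorem posDef_submatrix_add_smul_one (hM : M.PosSemidef) (hc : 0 < c) (e : m → ι) :
    (M.submatrix e e + c • 1).PosDef :=
  PosDef.posSemidef_add (hM.submatrix e) (PosDef.one.smul hc)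

theorem posSemidef_posteriorCovariance [Fintype m] [Finite ι] (hM : M.PosSemidef)
    (hc : 0 < c) (e : m → ι) : (posteriorCovariance M c e).PosSemidef := by
  classical
  have := Fintype.ofFinite ι
  have hjoint : (fromBlocks (M.submatrix e e + c • 1) (M.submatrix e id)
      (M.submatrix e id)ᴴ M).PosSemidef := by
    have hnoise : (fromBlocks (c • 1 : Matrix m m 𝕜) 0 0 (0 : Matrix ι ι 𝕜)).PosSemidef := by
      rw [smul_one_eq_diagonal, ← diagonal_zero, fromBlocks_diagonal]
      exact PosSemidef.diagonal (by rintro (_ | _) <;> simp [hc.le])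
    have hsum := (hM.submatrix (Sum.elim e id)).add hnoise
    rw [submatrix_sumElim_eq_fromBlocks, fromBlocks_add] at hsum
    simpa [conjTranspose_submatrix, hM.isHermitian.eq] using hsum
  have hA := posDef_submatrix_add_smul_one hM hc e
  let := hA.isUnit.invertible
  have hschur := (PosDef.fromBlocks₁₁ _ _ hA).1 hjoint
  rwa [conjTranspose_submatrix, hM.isHermitian.eq] at hschur

theorem posteriorCovariance_apply_self_le [Fintype m] (hM : M.PosSemidef) (hc : 0 < c)
    (e : m → ι) (t : ι) : posteriorCovariance M c e t t ≤ M t t := by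
  have hreduction := ((posDef_submatrix_add_smul_one hM hc e).inv.posSemidef
    |>.conjTranspose_mul_mul_same (M.submatrix e fun _ : Unit ↦ t)).diag_nonneg (i := ())
  rw [conjTranspose_submatrix, hM.isHermitian.eq] at hreduction
  exact sub_le_self _ hreduction

theorem det_one_add_inv_smul_eq_prod_posteriorCovariance {k : ℕ} {M : Matrix (Fin k) (Fin k) 𝕜}
    (hM : M.PosSemidef) (hc : 0 < c) :
    (1 + c⁻¹ • M).det =
      ∏ t : Fin k, (1 + posteriorCovariance M c (Fin.castLE t.isLt.le) t t * c⁻¹) := by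
  have hscale : 1 + c⁻¹ • M = c⁻¹ • (M + c • 1) := by
    rw [smul_add, inv_smul_smul₀ hc.ne', add_comm]
  rw [hscale, det_smul, det_add_smul_one_eq_prod_posteriorCovariance M fun t ↦
    (posDef_submatrix_add_smul_one hM hc (Fin.castLE t.isLt.le)).isUnit,
    ← Finset.card_univ, ← Finset.prod_const, ← Finset.prod_mul_distrib]
  refine Finset.prod_congr rfl fun t _ ↦ ?_
  rw [mul_add, inv_mul_cancel₀ hc.ne', add_comm, mul_comm]

end RCLike

/-- Matrix form of Lemma 4: the sum of the Gaussian process posterior variances of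
the selected points is at most `(1 / log (1 + σ⁻²))` times `log det (I + σ⁻² M)`. -/
theorem sum_posterior_variances_le (n : ℕ) (M : Matrix (Fin n) (Fin n) ℝ)
    (hM : M.PosSemidef) (hdiag : ∀ t : Fin n, M t t ≤ 1) (σ : ℝ) (hσ : 0 < σ) :
    ∑ t : Fin n,
        (M t t -
          (fun i : Fin (t : ℕ) => M (Fin.castLE t.isLt.le i) t) ⬝ᵥ
            (M.submatrix (Fin.castLE t.isLt.le) (Fin.castLE t.isLt.le) +
                σ ^ 2 • (1 : Matrix (Fin (t : ℕ)) (Fin (t : ℕ)) ℝ))⁻¹ *ᵥ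
              (fun i : Fin (t : ℕ) => M (Fin.castLE t.isLt.le i) t)) ≤
      (1 / Real.log (1 + (σ ^ 2)⁻¹)) *
        Real.log ((1 + (σ ^ 2)⁻¹ • M : Matrix (Fin n) (Fin n) ℝ).det) := by
  have hc : 0 < σ ^ 2 := by positivity
  have hprec : 0 < (σ ^ 2)⁻¹ := inv_pos.2 hc
  let s (t : Fin n) : ℝ := posteriorCovariance M (σ ^ 2) (Fin.castLE t.isLt.le) t t
  have hs₀ (t : Fin n) : 0 ≤ s t := (posSemidef_posteriorCovariance hM hc _).diag_nonneg
  have hs₁ (t : Fin n) : s t ≤ 1 :=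
    (posteriorCovariance_apply_self_le hM hc _ t).trans (hdiag t)
  simp_rw [← posteriorCovariance_apply_self (isHermitian_iff_isSymm.1 hM.isHermitian)]
  rw [one_div_mul_eq_div, le_div_iff₀ (Real.log_pos (by linarith)), Finset.sum_mul]
  calc ∑ t, s t * Real.log (1 + (σ ^ 2)⁻¹)
      ≤ ∑ t, Real.log (1 + s t * (σ ^ 2)⁻¹) := Finset.sum_le_sum fun t _ ↦
        mul_log_one_add_le_log_one_add_mul (by linarith) (hs₀ t) (hs₁ t)
    _ = Real.log (∏ t, (1 + s t * (σ ^ 2)⁻¹)) := (Real.log_prod fun t _ ↦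
        (add_pos_of_pos_of_nonneg one_pos (mul_nonneg (hs₀ t) hprec.le)).ne').symm
    _ = Real.log (1 + (σ ^ 2)⁻¹ • M).det := by
        rw [det_one_add_inv_smul_eq_prod_posteriorCovariance hM hc]
end

section
/- Let n be a natural number, let M be an n×n real symmetric positive semidefinite matrix, and let σ > 0. For each t < n let M_t denote the top-left t×t block of M, let v_t ∈ ℝ^t be the vector with entries (M_{i,t})_{i<t}, and define the posterior variance s_t² := M_{t,t} - v_tᵀ (M_t + σ²·I_t)⁻¹ v_t. Then det(I_n + σ⁻²·M) = ∏_{t<n} (1 + σ⁻²·s_t²). -/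
open Matrix

/-!
With `c = σ²`, the posterior variance of the `t`-th point is, up to the shift `c`, the Schur
complement in `M + c I` of the noisy Gram matrix of the previous points, i.e. the `t`-th pivot of
`M + c I` under Gaussian elimination. The determinant is the product of the pivots, and dividing
each of them by `c` gives the factors `1 + c⁻¹ s_t²`. Positive semidefiniteness of `M` makes the
leading blocks of `M + c I` positive definite, so that elimination needs no row exchanges.
-/

/-- The top-left `t × t` block of a square matrix: the rows and columns strictly before `t`. -/
def leadingBlock {α : Type*} {n : ℕ} (A : Matrix (Fin n) (Fin n) α) (t : Fin n) :
    Matrix (Fin t) (Fin t) α :=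
  A.submatrix (Fin.castLE t.isLt.le) (Fin.castLE t.isLt.le)

section CommRing

variable {R : Type*} [CommRing R] {n : ℕ}

/-- The `t`-th pivot of Gaussian elimination without row exchanges, encoded as the Schur complement
of the leading `t × t` block in the leading `(t + 1) × (t + 1)` block. It is meaningful only when
the leading `t × t` block is invertible. -/
noncomputable def pivot (A : Matrix (Fin n) (Fin n) R) (t : Fin n) : R :=
  A t t - (fun i : Fin t => A t (Fin.castLE t.isLt.le i)) ⬝ᵥ
    (leadingBlock A t)⁻¹ *ᵥ (fun i : Fin t => A (Fin.castLE t.isLt.le i) t)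

/-- The Gaussian process posterior variance of the `t`-th point given observations with noise
variance `c` at the previous points, where `M` is the Gram matrix of the points. The row and the
column of `M` through `(t, t)` enter separately, so that the definition is the right one for
matrices that are not symmetric as well. -/
noncomputable def posteriorVariance (M : Matrix (Fin n) (Fin n) R) (c : R) (t : Fin n) : R :=
  M t t - (fun i : Fin t => M t (Fin.castLE t.isLt.le i)) ⬝ᵥ
    (leadingBlock M t + c • (1 : Matrix (Fin t) (Fin t) R))⁻¹ *ᵥ
      (fun i : Fin t => M (Fin.castLE t.isLt.le i) t)

theorem leadingBlock_add_smul_one (M : Matrix (Fin n) (Fin n) R) (c : R) (t : Fin n) :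
    leadingBlock (M + c • 1) t = leadingBlock M t + c • 1 := by
  simp only [leadingBlock, submatrix_add, submatrix_smul, Pi.add_apply, Pi.smul_apply,
    submatrix_one _ (Fin.castLE_injective t.isLt.le)]

theorem pivot_add_smul_one (M : Matrix (Fin n) (Fin n) R) (c : R) (t : Fin n) :
    pivot (M + c • 1) t = c + posteriorVariance M c t := by
  have hne (i : Fin t) : Fin.castLE t.isLt.le i ≠ t := Fin.ne_of_lt i.isLt
  simp only [pivot, posteriorVariance, leadingBlock_add_smul_one, Matrix.add_apply,
    Matrix.smul_apply, one_apply_eq, one_apply_ne (hne _), one_apply_ne (hne _).symm, smul_eq_mul,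
    mul_one, mul_zero, add_zero]
  ring

theorem det_eq_det_leadingBlock_last_mul_pivot (A : Matrix (Fin (n + 1)) (Fin (n + 1)) R)
    (hA : IsUnit (leadingBlock A (Fin.last n))) :
    A.det = (leadingBlock A (Fin.last n)).det * pivot A (Fin.last n) := by
  let B := A.submatrix (finSumFinEquiv (m := n) (n := 1)) finSumFinEquiv
  have : Invertible B.toBlocks₁₁ := hA.invertible
  calc A.det = (fromBlocks B.toBlocks₁₁ B.toBlocks₁₂ B.toBlocks₂₁ B.toBlocks₂₂).det := by
        rw [fromBlocks_toBlocks, det_submatrix_equiv_self]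
    _ = B.toBlocks₁₁.det * (B.toBlocks₂₂ 0 0 -
          (B.toBlocks₂₁ * (B.toBlocks₁₁⁻¹ * B.toBlocks₁₂)) 0 0) := by
        rw [det_fromBlocks₁₁, invOf_eq_nonsing_inv, det_fin_one, Matrix.mul_assoc,
          Matrix.sub_apply]
    _ = (leadingBlock A (Fin.last n)).det * pivot A (Fin.last n) := rfl

theorem det_eq_prod_pivot (A : Matrix (Fin n) (Fin n) R) (hA : ∀ t, IsUnit (leadingBlock A t)) :
    A.det = ∏ t, pivot A t := by
  induction n with
  | zero => simp
  | succ n ih =>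
    have hlead : (leadingBlock A (Fin.last n)).det = ∏ t : Fin n, pivot A t.castSucc :=
      ih (A.submatrix Fin.castSucc Fin.castSucc) fun t => hA t.castSucc
    rw [det_eq_det_leadingBlock_last_mul_pivot A (hA _), hlead, Fin.prod_univ_castSucc]

theorem posteriorVariance_of_isSymm {M : Matrix (Fin n) (Fin n) R} (hM : M.IsSymm) (c : R)
    (t : Fin n) :
    posteriorVariance M c t =
      M t t - (fun i : Fin t => M (Fin.castLE t.isLt.le i) t) ⬝ᵥ
        (leadingBlock M t + c • (1 : Matrix (Fin t) (Fin t) R))⁻¹ *ᵥ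
          (fun i : Fin t => M (Fin.castLE t.isLt.le i) t) := by
  simp only [posteriorVariance, hM.apply]

end CommRing

section Field

variable {K : Type*} [Field K]

theorem det_one_add_inv_smul {ι : Type*} [Fintype ι] [DecidableEq ι] (M : Matrix ι ι K) {c : K}
    (hc : c ≠ 0) : (1 + c⁻¹ • M).det = c⁻¹ ^ Fintype.card ι * (M + c • 1).det := by
  rw [← det_smul, smul_add, inv_smul_smul₀ hc, add_comm]

theorem det_eq_prod_posterior_variances_general {n : ℕ} (M : Matrix (Fin n) (Fin n) K) {c : K}
    (hc : c ≠ 0) (hM : ∀ t, IsUnit (leadingBlock M t + c • 1)) :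
    (1 + c⁻¹ • M).det = ∏ t, (1 + c⁻¹ * posteriorVariance M c t) := by
  have hlead (t : Fin n) : IsUnit (leadingBlock (M + c • 1) t) := by
    rw [leadingBlock_add_smul_one]
    exact hM t
  have hpivots : (M + c • 1).det = ∏ t, (c + posteriorVariance M c t) := by
    simp only [det_eq_prod_pivot _ hlead, pivot_add_smul_one]
  calc (1 + c⁻¹ • M).det = c⁻¹ ^ n * ∏ t, (c + posteriorVariance M c t) := by
        rw [det_one_add_inv_smul M hc, Fintype.card_fin, hpivots]
    _ = ∏ t, c⁻¹ * (c + posteriorVariance M c t) := by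
        rw [Finset.prod_mul_distrib, Fin.prod_const]
    _ = ∏ t, (1 + c⁻¹ * posteriorVariance M c t) := by
        simp only [mul_add, inv_mul_cancel₀ hc]

end Field

theorem isUnit_add_smul_one_of_posSemidef {K ι : Type*} [Field K] [PartialOrder K] [StarRing K]
    [StarOrderedRing K] [Fintype ι] [DecidableEq ι] {A : Matrix ι ι K} (hA : A.PosSemidef) {c : K}
    (hc : 0 < c) : IsUnit (A + c • 1) :=
  (PosDef.posSemidef_add hA (PosDef.one.smul hc)).isUnit

/-- Matrix form of the information-gain identity (Lemma 5.3 of Srinivas et al.):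
`det (I + σ⁻² M) = ∏_t (1 + σ⁻² s_t²)` where `s_t²` is the posterior variance of the
`t`-th point given noisy observations at the previous `t` points. -/
theorem det_eq_prod_posterior_variances (n : ℕ) (M : Matrix (Fin n) (Fin n) ℝ)
    (hM : M.PosSemidef) (σ : ℝ) (hσ : 0 < σ) :
    (1 + (σ ^ 2)⁻¹ • M : Matrix (Fin n) (Fin n) ℝ).det =
      ∏ t : Fin n,
        (1 + (σ ^ 2)⁻¹ *
          (M t t -
            (fun i : Fin (t : ℕ) => M (Fin.castLE t.isLt.le i) t) ⬝ᵥ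
              (M.submatrix (Fin.castLE t.isLt.le) (Fin.castLE t.isLt.le) +
                  σ ^ 2 • (1 : Matrix (Fin (t : ℕ)) (Fin (t : ℕ)) ℝ))⁻¹ *ᵥ
                (fun i : Fin (t : ℕ) => M (Fin.castLE t.isLt.le i) t))) := by
  have hsymm : M.IsSymm := isHermitian_iff_isSymm.mp hM.isHermitian
  have hc : 0 < σ ^ 2 := by positivity
  have hunit (t : Fin n) : IsUnit (leadingBlock M t + σ ^ 2 • 1) :=
    isUnit_add_smul_one_of_posSemidef (hM.submatrix _) hc
  rw [det_eq_prod_posterior_variances_general M hc.ne' hunit]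
  simp only [posteriorVariance_of_isSymm hsymm, leadingBlock]
end

section
/- Let n be a natural number, let N be an (n+1)×(n+1) real symmetric positive semidefinite matrix, and let σ > 0. For a subset S ⊆ {0, …, n-1}, let A_S be the principal submatrix of N with rows and columns in S, let b_S be the vector (N_{i,n})_{i∈S}, and define var(S) := N_{n,n} - b_Sᵀ (A_S + σ²·I_S)⁻¹ b_S. Then for all subsets S ⊆ T ⊆ {0, …, n-1}, var(T) ≤ var(S). -/
open Matrix

/-- The Gaussian process posterior variance of a distinguished point (indexed `n`)
given noisy observations at the points indexed by `S`. -/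
noncomputable def postVar (n : ℕ) (N : Matrix (Fin (n + 1)) (Fin (n + 1)) ℝ) (σ : ℝ)
    (S : Finset (Fin n)) : ℝ :=
  N (Fin.last n) (Fin.last n) -
    (fun i : ↥S => N (Fin.castSucc (i : Fin n)) (Fin.last n)) ⬝ᵥ
      ((Matrix.of fun i j : ↥S => N (Fin.castSucc (i : Fin n)) (Fin.castSucc (j : Fin n))) +
          σ ^ 2 • (1 : Matrix ↥S ↥S ℝ))⁻¹ *ᵥ
        fun i : ↥S => N (Fin.castSucc (i : Fin n)) (Fin.last n)

/-!
Let `M` be positive definite, `Pᴴ M P` invertible and `Q = P (Pᴴ M P)⁻¹ Pᴴ`. Then `Q M Q = Q`,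
so `M⁻¹ - Q = (M⁻¹ - Q) M (M⁻¹ - Q)` is positive semidefinite. When `P` selects coordinates,
`Pᴴ M P` is a principal submatrix of `M`, and the quadratic form of `M⁻¹` therefore dominates that
of the inverse of the principal submatrix. This quadratic form is the variance explained by the
observations.
-/

section InverseCompression

variable {m n R : Type*} [Fintype m] [Fintype n] [DecidableEq m] [DecidableEq n]
  [CommRing R] [StarRing R] {M : Matrix n n R} {P : Matrix n m R}

lemma inv_sub_mul_mul_inv_sub_compression (hM : IsUnit M) (hPMP : IsUnit (Pᴴ * M * P)) :
    (M⁻¹ - P * (Pᴴ * M * P)⁻¹ * Pᴴ) * M * (M⁻¹ - P * (Pᴴ * M * P)⁻¹ * Pᴴ) =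
      M⁻¹ - P * (Pᴴ * M * P)⁻¹ * Pᴴ := by
  set Q := P * (Pᴴ * M * P)⁻¹ * Pᴴ with hQ
  have hQMQ : Q * M * Q = Q := calc
    Q * M * Q = P * ((Pᴴ * M * P)⁻¹ * (Pᴴ * M * P)) * (Pᴴ * M * P)⁻¹ * Pᴴ := by
      simp only [hQ, Matrix.mul_assoc]
    _ = Q := by
      rw [nonsing_inv_mul _ ((isUnit_iff_isUnit_det _).1 hPMP), Matrix.mul_one]
  have hdet : IsUnit M.det := (isUnit_iff_isUnit_det M).1 hM
  rw [Matrix.sub_mul, nonsing_inv_mul _ hdet, Matrix.sub_mul, Matrix.one_mul, Matrix.mul_sub,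
    mul_nonsing_inv_cancel_right _ _ hdet, hQMQ, sub_self, sub_zero]

lemma posSemidef_inv_sub_compression [PartialOrder R] (hM : M.PosSemidef) (hMu : IsUnit M)
    (hPMP : IsUnit (Pᴴ * M * P)) :
    (M⁻¹ - P * (Pᴴ * M * P)⁻¹ * Pᴴ).PosSemidef := by
  have hherm : (M⁻¹ - P * (Pᴴ * M * P)⁻¹ * Pᴴ).IsHermitian :=
    hM.isHermitian.inv.sub <|
      isHermitian_mul_mul_conjTranspose P (isHermitian_conjTranspose_mul_mul P hM.isHermitian).inv
  have hconj := hM.conjTranspose_mul_mul_same (M⁻¹ - P * (Pᴴ * M * P)⁻¹ * Pᴴ)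
  rwa [hherm.eq, inv_sub_mul_mul_inv_sub_compression hMu hPMP] at hconj

end InverseCompression

section PrincipalSubmatrix

variable {m n R : Type*} [Fintype n] [DecidableEq n]

lemma conjTranspose_mul_mul_one_submatrix [Semiring R] [StarRing R] (M : Matrix n n R)
    (e : m → n) :
    ((1 : Matrix n n R).submatrix id e)ᴴ * M * (1 : Matrix n n R).submatrix id e =
      M.submatrix e e := by
  rw [conjTranspose_submatrix, conjTranspose_one]
  have select_rows : (1 : Matrix n n R).submatrix e id * M = M.submatrix e id :=
    one_submatrix_mul e (Equiv.refl n) M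
  rw [select_rows]
  exact mul_submatrix_one (Equiv.refl n) e (M.submatrix e id)

lemma conjTranspose_one_submatrix_mulVec [Semiring R] [StarRing R] (e : m → n) (b : n → R) :
    ((1 : Matrix n n R).submatrix id e)ᴴ *ᵥ b = b ∘ e := by
  rw [conjTranspose_submatrix, conjTranspose_one]
  exact funext fun i => congrFun (one_mulVec b) (e i)

lemma dotProduct_inv_submatrix_mulVec_le [Fintype m] [DecidableEq m] [Field R] [PartialOrder R]
    [StarRing R] [StarOrderedRing R] {M : Matrix n n R} (hM : M.PosDef) {e : m → n}
    (he : Function.Injective e) (b : n → R) :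
    star (b ∘ e) ⬝ᵥ (M.submatrix e e)⁻¹ *ᵥ (b ∘ e) ≤ star b ⬝ᵥ M⁻¹ *ᵥ b := by
  have hPMP := conjTranspose_mul_mul_one_submatrix M e
  have hdiff := posSemidef_inv_sub_compression hM.posSemidef hM.isUnit
    (hPMP ▸ (hM.submatrix he).isUnit)
  have hbP : star b ᵥ* (1 : Matrix n n R).submatrix id e = star (b ∘ e) := by
    rw [← conjTranspose_one_submatrix_mulVec, star_mulVec, conjTranspose_conjTranspose]
  have hquad := hdiff.dotProduct_mulVec_nonneg b
  rwa [hPMP, sub_mulVec, dotProduct_sub, sub_nonneg, ← mulVec_mulVec, ← mulVec_mulVec,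
    dotProduct_mulVec, hbP, conjTranspose_one_submatrix_mulVec] at hquad

end PrincipalSubmatrix

section PosteriorVariance

variable {n : ℕ} {N : Matrix (Fin (n + 1)) (Fin (n + 1)) ℝ} {σ : ℝ}

/-- The covariance matrix `K + σ² I` of noisy observations at all `n` non-distinguished points,
where `K` is the kernel matrix of those points. -/
def noisyCov (N : Matrix (Fin (n + 1)) (Fin (n + 1)) ℝ) (σ : ℝ) : Matrix (Fin n) (Fin n) ℝ :=
  N.submatrix Fin.castSucc Fin.castSucc + σ ^ 2 • 1

/-- The vector of kernel values between the `n` observation points and the distinguished point. -/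
def crossCov (N : Matrix (Fin (n + 1)) (Fin (n + 1)) ℝ) (i : Fin n) : ℝ :=
  N i.castSucc (Fin.last n)

lemma posDef_noisyCov (hN : N.PosSemidef) (hσ : σ ≠ 0) : (noisyCov N σ).PosDef :=
  PosDef.posSemidef_add (hN.submatrix Fin.castSucc) (PosDef.one.smul (sq_pos_of_ne_zero hσ))

lemma postVar_eq_sub_noisyCov_submatrix (N : Matrix (Fin (n + 1)) (Fin (n + 1)) ℝ) (σ : ℝ)
    (S : Finset (Fin n)) :
    postVar n N σ S = N (Fin.last n) (Fin.last n) -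
      (crossCov N ∘ Subtype.val) ⬝ᵥ
        ((noisyCov N σ).submatrix Subtype.val Subtype.val : Matrix S S ℝ)⁻¹ *ᵥ
          (crossCov N ∘ Subtype.val) := by
  rw [noisyCov, submatrix_add, Pi.add_apply, Pi.add_apply, submatrix_smul, Pi.smul_apply,
    Pi.smul_apply, submatrix_one _ Subtype.val_injective]
  rfl

theorem postVar_antitone_general (hK : (noisyCov N σ).PosDef) : Antitone (postVar n N σ) := by
  intro S T hST
  rw [postVar_eq_sub_noisyCov_submatrix, postVar_eq_sub_noisyCov_submatrix]
  have hT : ((noisyCov N σ).submatrix Subtype.val Subtype.val : Matrix T T ℝ).PosDef :=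
    hK.submatrix Subtype.val_injective
  exact sub_le_sub_left (dotProduct_inv_submatrix_mulVec_le hT (Set.inclusion_injective hST)
    (crossCov N ∘ Subtype.val)) _

end PosteriorVariance

/-- "Information never hurts": the posterior variance is non-increasing in the set of
observation points. -/
theorem postVar_antitone (n : ℕ) (N : Matrix (Fin (n + 1)) (Fin (n + 1)) ℝ)
    (hN : N.PosSemidef) (σ : ℝ) (hσ : 0 < σ) (S T : Finset (Fin n)) (hST : S ⊆ T) :
    postVar n N σ T ≤ postVar n N σ S :=
  postVar_antitone_general (posDef_noisyCov hN hσ.ne') hST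
end

section
/- Let (Ω, P) be a probability space, let D be a nonempty finite set, let 0 < δ < 1, and for each natural number t and each i ∈ D let X_{t,i} : Ω → ℝ be a measurable random variable whose law is the standard Gaussian measure (mean 0, variance 1). Define β_t := 2·log(|D|·(t+1)²·π²/(6·δ)). Then P({ω ∈ Ω : ∃ t ∈ ℕ, ∃ i ∈ D, |X_{t,i}(ω)| > √β_t}) ≤ δ. -/
open MeasureTheory ProbabilityTheory

/-!
The crude bound `P (c < |X|) ≤ 2 exp (-c² / 2)` for a standard Gaussian `X` would lose a factor `2`
in the calibration. It is avoided by comparing densities: `(x + c)² ≥ x² + c²` for `x, c ≥ 0`, so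
the mass beyond distance `c` from the mean on either side is at most `exp (-c² / 2)` times the mass
on that side, and the masses of the two sides add up to at most `1`. Solving `exp (-c² / 2) = w` for
`c` turns a prescribed failure probability `w` into a confidence radius. A union bound over
`ℕ × D`, with failure probabilities proportional to `1 / (t + 1)²`, concludes.
-/

open scoped NNReal

section GaussianTail

variable {μ c : ℝ} {v : ℝ≥0}

lemma gaussianPDF_sub_mean_le {x : ℝ} (hc : 0 ≤ c) (hx : μ ≤ x) :
    gaussianPDF (μ - c) v x ≤ ENNReal.ofReal (Real.exp (-c ^ 2 / (2 * v))) * gaussianPDF μ v x := by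
  rw [gaussianPDF, gaussianPDF, ← ENNReal.ofReal_mul (Real.exp_nonneg _), gaussianPDFReal,
    gaussianPDFReal, mul_left_comm, ← Real.exp_add, ← add_div]
  have hsq : c ^ 2 + (x - μ) ^ 2 ≤ (x - (μ - c)) ^ 2 := by
    nlinarith [mul_nonneg hc (sub_nonneg.2 hx)]
  gcongr
  linarith

lemma gaussianReal_Ioi_mean_add_le (hv : v ≠ 0) (hc : 0 ≤ c) :
    gaussianReal μ v (Set.Ioi (μ + c)) ≤
      ENNReal.ofReal (Real.exp (-c ^ 2 / (2 * v))) * gaussianReal μ v (Set.Ioi μ) := by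
  have translate : gaussianReal μ v (Set.Ioi (μ + c)) = gaussianReal (μ - c) v (Set.Ioi μ) := by
    rw [← gaussianReal_map_sub_const, Measure.map_apply (by fun_prop) measurableSet_Ioi,
      Set.preimage_sub_const_Ioi]
  rw [translate, gaussianReal_apply _ hv, gaussianReal_apply _ hv,
    ← lintegral_const_mul' _ _ ENNReal.ofReal_ne_top]
  exact setLIntegral_mono' measurableSet_Ioi fun x hx ↦ gaussianPDF_sub_mean_le hc (le_of_lt hx)

lemma gaussianReal_Iio_eq_gaussianReal_neg_Ioi (a : ℝ) :
    gaussianReal μ v (Set.Iio a) = gaussianReal (-μ) v (Set.Ioi (-a)) := by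
  rw [← gaussianReal_map_neg, Measure.map_apply measurable_neg measurableSet_Ioi,
    Set.neg_preimage, Set.neg_Ioi, neg_neg]

lemma gaussianReal_Iio_mean_sub_le (hv : v ≠ 0) (hc : 0 ≤ c) :
    gaussianReal μ v (Set.Iio (μ - c)) ≤
      ENNReal.ofReal (Real.exp (-c ^ 2 / (2 * v))) * gaussianReal μ v (Set.Iio μ) := by
  rw [gaussianReal_Iio_eq_gaussianReal_neg_Ioi, gaussianReal_Iio_eq_gaussianReal_neg_Ioi, neg_sub',
    sub_neg_eq_add]
  exact gaussianReal_Ioi_mean_add_le hv hc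

lemma gaussianReal_lt_abs_sub_mean_le (hv : v ≠ 0) (hc : 0 ≤ c) :
    gaussianReal μ v {x | c < |x - μ|} ≤ ENNReal.ofReal (Real.exp (-c ^ 2 / (2 * v))) := by
  have tails : {x | c < |x - μ|} = Set.Iio (μ - c) ∪ Set.Ioi (μ + c) := by
    ext x
    simp only [Set.mem_ofPred_eq, lt_abs, Set.mem_union, Set.mem_Iio, Set.mem_Ioi]
    grind
  have sides : gaussianReal μ v (Set.Iio μ) + gaussianReal μ v (Set.Ioi μ) ≤ 1 := by
    rw [← measure_union Set.Iio_disjoint_Ioi_same measurableSet_Ioi]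
    exact prob_le_one
  calc gaussianReal μ v {x | c < |x - μ|}
      ≤ gaussianReal μ v (Set.Iio (μ - c)) + gaussianReal μ v (Set.Ioi (μ + c)) :=
        tails ▸ measure_union_le _ _
    _ ≤ ENNReal.ofReal (Real.exp (-c ^ 2 / (2 * v))) *
          (gaussianReal μ v (Set.Iio μ) + gaussianReal μ v (Set.Ioi μ)) := by
        rw [mul_add]
        exact add_le_add (gaussianReal_Iio_mean_sub_le hv hc) (gaussianReal_Ioi_mean_add_le hv hc)
    _ ≤ ENNReal.ofReal (Real.exp (-c ^ 2 / (2 * v))) := mul_le_of_le_one_right' sides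

end GaussianTail

section Calibration

lemma gaussianReal_sqrt_log_inv_lt_abs_sub_mean_le {μ w : ℝ} {v : ℝ≥0} (hv : v ≠ 0) (hw : 0 < w) :
    gaussianReal μ v {x | √(2 * v * Real.log w⁻¹) < |x - μ|} ≤ ENNReal.ofReal w := by
  have hv_pos : (0 : ℝ) < 2 * v := by positivity
  refine (gaussianReal_lt_abs_sub_mean_le hv (Real.sqrt_nonneg _)).trans
    (ENNReal.ofReal_le_ofReal ?_)
  -- An inequality, since for `w > 1` the radicand is negative and its square root is `0`.
  have log_inv_le : Real.log w⁻¹ ≤ √(2 * v * Real.log w⁻¹) ^ 2 / (2 * v) := by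
    rw [le_div_iff₀' hv_pos, Real.sq_sqrt']
    exact le_max_left _ _
  calc Real.exp (-√(2 * v * Real.log w⁻¹) ^ 2 / (2 * v))
      ≤ Real.exp (-Real.log w⁻¹) := by
        rw [neg_div]
        gcongr
    _ = w := by rw [Real.log_inv, neg_neg, Real.exp_log hw]

theorem confidence_calibration_general {Ω ι : Type*} [MeasurableSpace Ω] {P : Measure Ω}
    [Countable ι] {X : ι → Ω → ℝ} {μ : ι → ℝ} {v : ι → ℝ≥0} {w : ι → ℝ} (hv : ∀ k, v k ≠ 0)
    (hw : ∀ k, 0 < w k) (hX : ∀ k, HasLaw (X k) (gaussianReal (μ k) (v k)) P) :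
    P {ω | ∃ k, √(2 * v k * Real.log (w k)⁻¹) < |X k ω - μ k|} ≤ ∑' k, ENNReal.ofReal (w k) := by
  rw [Set.ofPred_exists]
  refine (measure_iUnion_le _).trans (ENNReal.tsum_le_tsum fun k ↦ ?_)
  rw [(hX k).measure_eq (p := fun x ↦ √(2 * v k * Real.log (w k)⁻¹) < |x - μ k|)
    (measurableSet_lt (by fun_prop) (by fun_prop))]
  exact gaussianReal_sqrt_log_inv_lt_abs_sub_mean_le (hv k) (hw k)

/-- The share of a total failure probability `δ` that the calibration allots to each single point
of the decision set `D` in round `t`, with rounds counted from `0`. It is the inverse of the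
argument of the logarithm in the confidence parameter `β t`. -/
noncomputable def failureShare (D : Type*) [Fintype D] (δ : ℝ) (t : ℕ) : ℝ :=
  6 * δ / ((Fintype.card D : ℝ) * ((t : ℝ) + 1) ^ 2 * Real.pi ^ 2)

variable {D : Type*} [Fintype D] [Nonempty D] {δ : ℝ}

lemma failureShare_pos (hδ : 0 < δ) (t : ℕ) : 0 < failureShare D δ t := by
  unfold failureShare
  positivity

lemma hasSum_card_mul_failureShare :
    HasSum (fun t ↦ (Fintype.card D : ℝ) * failureShare D δ t) δ := by
  have basel : HasSum (fun t : ℕ ↦ 1 / ((t : ℝ) + 1) ^ 2) (Real.pi ^ 2 / 6) := by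
    simpa using (hasSum_nat_add_iff' 1).2 hasSum_zeta_two
  have share_eq (t : ℕ) : (Fintype.card D : ℝ) * failureShare D δ t =
      6 * δ / Real.pi ^ 2 * (1 / ((t : ℝ) + 1) ^ 2) := by
    unfold failureShare
    field_simp
  have total_eq : 6 * δ / Real.pi ^ 2 * (Real.pi ^ 2 / 6) = δ := by field_simp
  have scaled := basel.mul_left (6 * δ / Real.pi ^ 2)
  rw [total_eq] at scaled
  simpa only [share_eq] using scaled

lemma tsum_ofReal_failureShare (hδ : 0 ≤ δ) :
    ∑' k : ℕ × D, ENNReal.ofReal (failureShare D δ k.1) = ENNReal.ofReal δ := by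
  have share_nonneg (t : ℕ) : 0 ≤ (Fintype.card D : ℝ) * failureShare D δ t := by
    unfold failureShare
    positivity
  calc ∑' k : ℕ × D, ENNReal.ofReal (failureShare D δ k.1)
      = ∑' t, ENNReal.ofReal (Fintype.card D * failureShare D δ t) := by
        rw [ENNReal.tsum_prod']
        simp only [tsum_fintype, Finset.sum_const, Finset.card_univ, nsmul_eq_mul,
          ENNReal.ofReal_mul (Nat.cast_nonneg _), ENNReal.ofReal_natCast]
    _ = ENNReal.ofReal δ := by
        rw [← ENNReal.ofReal_tsum_of_nonneg share_nonneg hasSum_card_mul_failureShare.summable,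
          hasSum_card_mul_failureShare.tsum_eq]

end Calibration

/-- Calibration of the confidence parameter for finite decision sets: with
`β t = 2 log (|D| (t+1)² π² / (6 δ))`, all the standard Gaussian variables `X t i`
stay within `√(β t)` simultaneously with probability at least `1 - δ`. -/
theorem confidence_calibration {Ω : Type*} [MeasurableSpace Ω] (P : Measure Ω)
    [IsProbabilityMeasure P] {D : Type*} [Fintype D] [Nonempty D]
    (δ : ℝ) (hδ0 : 0 < δ) (hδ1 : δ < 1)
    (X : ℕ → D → Ω → ℝ) (hmeas : ∀ t i, Measurable (X t i))
    (hlaw : ∀ t i, P.map (X t i) = gaussianReal 0 1) :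
    P {ω : Ω | ∃ t : ℕ, ∃ i : D,
        Real.sqrt (2 * Real.log ((Fintype.card D : ℝ) * ((t : ℝ) + 1) ^ 2 * Real.pi ^ 2 /
          (6 * δ))) < |X t i ω|} ≤ ENNReal.ofReal δ := by
  have union_bound := confidence_calibration_general (X := fun k : ℕ × D ↦ X k.1 k.2)
    (fun _ ↦ one_ne_zero) (fun k ↦ failureShare_pos (D := D) hδ0 k.1)
    (fun k ↦ ⟨(hmeas k.1 k.2).aemeasurable, hlaw k.1 k.2⟩)
  rw [tsum_ofReal_failureShare hδ0.le] at union_bound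
  simpa [failureShare] using union_bound
end

section
/- Let T ≥ 1 and K ≥ 1 be natural numbers, let B ≥ 0 and C ≥ 0 be reals, let β : ℕ → ℝ satisfy 0 ≤ β_t ≤ B for all t < T, let σ : ℕ → ℕ → ℝ be nonnegative, and let r : ℕ → ℝ. Assume: (i) r_t ≤ 2·√(β_t)·σ(t, 0) for all t < T; (ii) σ(t+1, 0) ≤ σ(t, k) for all t and all k with 1 ≤ k < K; (iii) ∑_{t<T} ∑_{k<K} σ(t, k)² ≤ C. Then ∑_{t<T} r_t ≤ 2·√B·σ(0, 0) + √(4·B·T·C/K). -/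
/-!
Every exploratory query of batch `t` is at least as uncertain as the UCB query of batch `t + 1`.
Hence `K` times the sum of the UCB deviations `σ t 0` is at most the sum of all `T * K` deviations,
up to the boundary term `(K - 1) * σ 0 0` created by shifting `t` by one. Cauchy–Schwarz over the
`T * K` queries bounds that sum through the sum of squared deviations; the gain of `1 / √K` arises
because dividing by `K` outweighs the factor `√K` lost in Cauchy–Schwarz.
-/

open Finset

section OrderedSums

variable {M : Type*} [AddCommMonoid M] [PartialOrder M] [IsOrderedAddMonoid M]

theorem add_nsmul_le_sum_range_succ_s13 {f : ℕ → M} {a : M} {n : ℕ} (h : ∀ k < n, a ≤ f (k + 1)) :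
    f 0 + n • a ≤ ∑ k ∈ range (n + 1), f k := by
  rw [sum_range_succ', add_comm]
  gcongr
  simpa using card_nsmul_le_sum (range n) (fun k => f (k + 1)) a fun k hk => h k (mem_range.1 hk)

theorem sum_range_le_add_sum_range_shift {f : ℕ → M} {T : ℕ} (hT : 0 ≤ f T) :
    ∑ t ∈ range T, f t ≤ f 0 + ∑ t ∈ range T, f (t + 1) :=
  calc ∑ t ∈ range T, f t ≤ ∑ t ∈ range T, f t + f T := le_add_of_nonneg_right hT
    _ = f 0 + ∑ t ∈ range T, f (t + 1) := by rw [← sum_range_succ, sum_range_succ', add_comm]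

theorem succ_nsmul_sum_first_le_add_sum_sum {σ : ℕ → ℕ → M} {T n : ℕ} (hT : 0 ≤ σ T 0)
    (hσ : ∀ t < T, ∀ k < n, σ (t + 1) 0 ≤ σ t (k + 1)) :
    (n + 1) • ∑ t ∈ range T, σ t 0 ≤
      n • σ 0 0 + ∑ t ∈ range T, ∑ k ∈ range (n + 1), σ t k :=
  calc (n + 1) • ∑ t ∈ range T, σ t 0
      = n • ∑ t ∈ range T, σ t 0 + ∑ t ∈ range T, σ t 0 := succ_nsmul _ _
    _ ≤ n • (σ 0 0 + ∑ t ∈ range T, σ (t + 1) 0) + ∑ t ∈ range T, σ t 0 := by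
      gcongr
      exact sum_range_le_add_sum_range_shift (f := fun t => σ t 0) hT
    _ = n • σ 0 0 + ∑ t ∈ range T, (σ t 0 + n • σ (t + 1) 0) := by
      rw [nsmul_add, sum_add_distrib, sum_nsmul, add_assoc, add_comm (n • ∑ t ∈ range T, _)]
    _ ≤ n • σ 0 0 + ∑ t ∈ range T, ∑ k ∈ range (n + 1), σ t k := by
      gcongr with t ht
      exact add_nsmul_le_sum_range_succ_s13 (hσ t (mem_range.1 ht))

end OrderedSums

section CauchySchwarz

variable {ι κ : Type*} (s : Finset ι) (t : Finset κ)

theorem sq_sum_sum_le_card_mul_card_mul_sum_sum_sq {R : Type*} [Semiring R] [LinearOrder R]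
    [IsStrictOrderedRing R] [ExistsAddOfLE R] (f : ι → κ → R) :
    (∑ i ∈ s, ∑ j ∈ t, f i j) ^ 2 ≤ #s * #t * ∑ i ∈ s, ∑ j ∈ t, f i j ^ 2 := by
  simpa only [sum_product, card_product, Nat.cast_mul] using
    sq_sum_le_card_mul_sum_sq (s := s ×ˢ t) (f := fun p => f p.1 p.2)

theorem sum_sum_div_card_le_sqrt (f : ι → κ → ℝ) :
    (∑ i ∈ s, ∑ j ∈ t, f i j) / #t ≤ √(#s * (∑ i ∈ s, ∑ j ∈ t, f i j ^ 2) / #t) := by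
  apply Real.le_sqrt_of_sq_le
  calc ((∑ i ∈ s, ∑ j ∈ t, f i j) / #t) ^ 2
      = (∑ i ∈ s, ∑ j ∈ t, f i j) ^ 2 / (#t : ℝ) ^ 2 := div_pow _ _ _
    _ ≤ #s * #t * (∑ i ∈ s, ∑ j ∈ t, f i j ^ 2) / (#t : ℝ) ^ 2 := by
      gcongr
      exact sq_sum_sum_le_card_mul_card_mul_sum_sum_sq s t f
    _ = #s * (∑ i ∈ s, ∑ j ∈ t, f i j ^ 2) / #t := by field_simp

end CauchySchwarz

theorem sum_first_le_add_sqrt_sum_sum_sq {σ : ℕ → ℕ → ℝ} {T n : ℕ} (h0 : 0 ≤ σ 0 0)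
    (hT : 0 ≤ σ T 0) (hσ : ∀ t < T, ∀ k < n, σ (t + 1) 0 ≤ σ t (k + 1)) :
    ∑ t ∈ range T, σ t 0 ≤
      σ 0 0 + √(T * (∑ t ∈ range T, ∑ k ∈ range (n + 1), σ t k ^ 2) / (n + 1 : ℕ)) := by
  have first_le_average : ∑ t ∈ range T, σ t 0 ≤
      σ 0 0 + (∑ t ∈ range T, ∑ k ∈ range (n + 1), σ t k) / (n + 1 : ℕ) := by
    have hsum := succ_nsmul_sum_first_le_add_sum_sum hT hσ
    rw [← sub_le_iff_le_add', le_div_iff₀ (by positivity)]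
    simp only [nsmul_eq_mul] at hsum
    push_cast at hsum ⊢
    linarith
  have average_le_sqrt := sum_sum_div_card_le_sqrt (range T) (range (n + 1)) σ
  simp only [card_range] at average_le_sqrt
  linarith

theorem sum_le_two_mul_sqrt_mul_sum {ι : Type*} {s : Finset ι} {r β w : ι → ℝ} {B : ℝ}
    (hβ : ∀ i ∈ s, β i ≤ B) (hw : ∀ i ∈ s, 0 ≤ w i) (hr : ∀ i ∈ s, r i ≤ 2 * √(β i) * w i) :
    ∑ i ∈ s, r i ≤ 2 * √B * ∑ i ∈ s, w i := by
  rw [mul_sum]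
  refine sum_le_sum fun i hi => (hr i hi).trans ?_
  have := hw i hi
  gcongr
  exact hβ i hi

theorem two_mul_sqrt_mul_sqrt {x : ℝ} (hx : 0 ≤ x) (y : ℝ) : 2 * √x * √y = √(4 * x * y) := by
  rw [Real.sqrt_mul (by positivity), Real.sqrt_mul zero_le_four, show (4 : ℝ) = 2 ^ 2 by norm_num,
    Real.sqrt_sq zero_le_two]

/-- Deterministic skeleton of Lemma 5 / Theorem 1 (batch cumulative regret bound). -/
theorem batch_cumulative_regret_bound (T K : ℕ) (hT : 1 ≤ T) (hK : 1 ≤ K)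
    (B C : ℝ) (hB : 0 ≤ B) (hC : 0 ≤ C)
    (β : ℕ → ℝ) (hβ : ∀ t < T, 0 ≤ β t ∧ β t ≤ B)
    (σ : ℕ → ℕ → ℝ) (hσ : ∀ t k, 0 ≤ σ t k) (r : ℕ → ℝ)
    (hr : ∀ t < T, r t ≤ 2 * Real.sqrt (β t) * σ t 0)
    (hmono : ∀ t k, 1 ≤ k → k < K → σ (t + 1) 0 ≤ σ t k)
    (hsum : ∑ t ∈ Finset.range T, ∑ k ∈ Finset.range K, (σ t k) ^ 2 ≤ C) :
    ∑ t ∈ Finset.range T, r t ≤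
      2 * Real.sqrt B * σ 0 0 + Real.sqrt (4 * B * T * C / K) := by
  obtain ⟨n, rfl⟩ := Nat.exists_eq_add_of_le' hK
  calc ∑ t ∈ range T, r t
      ≤ 2 * √B * ∑ t ∈ range T, σ t 0 :=
        sum_le_two_mul_sqrt_mul_sum (fun t ht => (hβ t (mem_range.1 ht)).2) (fun t _ => hσ t 0)
          fun t ht => hr t (mem_range.1 ht)
    _ ≤ 2 * √B *
          (σ 0 0 + √(T * (∑ t ∈ range T, ∑ k ∈ range (n + 1), σ t k ^ 2) / (n + 1 : ℕ))) := by
        gcongr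
        exact sum_first_le_add_sqrt_sum_sum_sq (hσ 0 0) (hσ T 0) fun t _ k hk =>
          hmono t (k + 1) (Nat.le_add_left 1 k) (Nat.succ_lt_succ hk)
    _ ≤ 2 * √B * (σ 0 0 + √(T * C / (n + 1 : ℕ))) := by gcongr
    _ = 2 * √B * σ 0 0 + √(4 * B * T * C / (n + 1 : ℕ)) := by
        rw [mul_add, two_mul_sqrt_mul_sqrt hB, ← mul_div_assoc, ← mul_assoc]
end

section
/- Let X be a nonempty set, let f, μ, s : X → ℝ with s(x) ≥ 0 for all x, and let b, b' be reals with 0 ≤ b ≤ b' and 2·b' ≤ 3·b. Assume |f(x) - μ(x)| ≤ b·s(x) for all x ∈ X. Let x• ∈ X be a maximizer of μ - b·s over X, let x_k ∈ X satisfy μ(x_k) + 2·b'·s(x_k) ≥ μ(x•) - b·s(x•), and let x⋆ ∈ X satisfy s(x⋆) ≤ s(x_k). Then f(x⋆) - f(x_k) ≤ 6·b·s(x_k). -/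
theorem sub_le_of_abs_sub_le_of_sub_le_add {G : Type*}
    [AddCommGroup G] [LinearOrder G] [IsOrderedAddMonoid G] {v₁ v₂ m₁ m₂ w₁ w₂ c : G}
    (h₁ : |v₁ - m₁| ≤ w₁) (h₂ : |v₂ - m₂| ≤ w₂) (h : m₁ - w₁ ≤ m₂ + c) :
    v₁ - v₂ ≤ 2 • w₁ + w₂ + c :=
  sub_le_iff_le_add'.mpr <| calc
    v₁ ≤ m₁ + w₁ := sub_le_iff_le_add'.mp (abs_sub_le_iff.mp h₁).1
    _ = (m₁ - w₁) + 2 • w₁ := by abel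
    _ ≤ (m₂ + c) + 2 • w₁ := by gcongr
    _ ≤ (v₂ + w₂ + c) + 2 • w₁ := by
      gcongr
      exact sub_le_iff_le_add'.mp (abs_sub_le_iff.mp h₂).2
    _ = v₂ + (2 • w₁ + w₂ + c) := by abel

theorem pure_exploration_regret_bound_general {X R : Type*}
    [CommRing R] [LinearOrder R] [IsOrderedRing R]
    {f μ s : X → R} {b b' y : R} {xk xstar : X}
    (hb : 0 ≤ b) (hb' : 2 * b' ≤ 3 * b) (hs : 0 ≤ s xk)
    (hconf_star : |f xstar - μ xstar| ≤ b * s xstar)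
    (hconf_k : |f xk - μ xk| ≤ b * s xk)
    (hy : μ xstar - b * s xstar ≤ y) (hxk : y ≤ μ xk + 2 * b' * s xk)
    (hstar : s xstar ≤ s xk) :
    f xstar - f xk ≤ 6 * b * s xk :=
  calc
    f xstar - f xk ≤ 2 • (b * s xstar) + b * s xk + 2 * b' * s xk :=
      sub_le_of_abs_sub_le_of_sub_le_add hconf_star hconf_k (hy.trans hxk)
    _ ≤ 2 • (b * s xk) + b * s xk + 3 * b * s xk := by gcongr
    _ = 6 * b * s xk := by ring

/-- Deterministic core of Lemma 6: regret bound for the Pure Exploration queries. -/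
theorem pure_exploration_regret_bound {X : Type*} [Nonempty X]
    (f μ s : X → ℝ) (hs : ∀ x : X, 0 ≤ s x)
    (b b' : ℝ) (hb : 0 ≤ b) (hbb' : b ≤ b') (hb' : 2 * b' ≤ 3 * b)
    (hconf : ∀ x : X, |f x - μ x| ≤ b * s x)
    (xb : X) (hxb : ∀ x : X, μ x - b * s x ≤ μ xb - b * s xb)
    (xk : X) (hxk : μ xb - b * s xb ≤ μ xk + 2 * b' * s xk)
    (xstar : X) (hstar : s xstar ≤ s xk) :
    f xstar - f xk ≤ 6 * b * s xk :=
  pure_exploration_regret_bound_general hb hb' (hs xk) (hconf xstar) (hconf xk)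
    (hxb xstar) hxk hstar
end
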